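/- Almost-sure essential uniqueness of the rank-(L,M,·) block-term decomposition (Lemma, Corollary 2.6 of Domanov et al. as stated in the paper). Let R, L, M, I, J, K be positive integers with I ≥ L·R, J ≥ M·R, and K ≥ max(⌈L/M⌉ + ⌈M/L⌉, 3). Then for Lebesgue-almost every tuple (A_r ∈ ℝ^{I×L}, B_r ∈ ℝ^{J×M}, D_r ∈ ℝ^{L×M×K}), r = 1,…,R, the tensor Y ∈ ℝ^{I×J×K} with entries Y[i,j,k] = Σ_{r=1}^R Σ_{l,m} D_r[l,m,k]·A_r[i,l]·B_r[j,m] has an essentially unique rank-(L,M,·) decomposition: for every other tuple (Ā_r ∈ ℝ^{I×L}, B̄_r ∈ ℝ^{J×M}, D̄_r ∈ ℝ^{L×M×K}) satisfying Y[i,j,k] = Σ_r Σ_{l,m} D̄_r[l,m,k]·Ā_r[i,l]·B̄_r[j,m] for all (i,j,k), there exist a permutation π of {1,…,R} and, for each r, invertible matrices Θ_{a,r} ∈ ℝ^{L×L} and Θ_{b,r} ∈ ℝ^{M×M} such that Ā_{π(r)} = A_r·Θ_{a,r}, B̄_{π(r)} = B_r·Θ_{b,r}, and for all (l,m,k): Σ_{l',m'}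 D̄_{π(r)}[l',m',k]·Θ_{a,r}[l,l']·Θ_{b,r}[m,m'] = D_r[l,m,k]. -/

import Mathlib

/-!
Two decompositions with core pencils `S r` and `S' r` of the same tensor, the first with left
invertible factors `[A₁ ⋯ A_R]` and `[B₁ ⋯ B_R]`, give an isomorphism between the direct sums of the
two families of pencils (tuples of frontal slices): because the direct sum of the `S r` is concise,
the change of bases is invertible and is determined by the tensor. If the `S r` are pairwise
Hom-orthogonal bricks, then, as in the Krull–Schmidt theorem, the nonzero blocks of this isomorphism
follow a permutation, which is the essential uniqueness.

Left invertibility and the brick property are injectivity conditions on linear maps depending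
linearly on the data, so they hold almost everywhere as soon as they hold at one point. Such a
family of pencils consists of the identity, the all-ones matrix and a diagonal matrix with distinct
entries when `L = M`. When `M < L`, the rows are cut into `⌈L / M⌉` layers of at most `M` rows:
one slice for each layer relates the left factor of a morphism to its right factor, and one further
slice, diagonal on the first layer and constant on the others, makes both scalar.
-/

open MeasureTheory

/-- Lebesgue (volume) measure on a real matrix space: the standard product
Lebesgue measure on the entries (inherited from the Pi type). -/
noncomputable instance matrixMeasureSpace (m n : ℕ) :
    MeasureSpace (Matrix (Fin m) (Fin n) ℝ) :=
  inferInstanceAs (MeasureSpace (Fin m → Fin n → ℝ))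

open Matrix Function

section Pencils

variable {F R κ l l' l'' m m' m'' : Type*} [CommSemiring F]

/-- Morphisms of matrix pencils: the pair `(P, V)` intertwines the families of slices `T'` and `T`
when `T k * V = P * T' k` for all `k`, that is, when it is a morphism from `T'` to `T` of
representations of the generalized Kronecker quiver with arrows `κ`. -/
def Intertwines [Fintype l'] [Fintype m] (T : κ → Matrix l m F) (T' : κ → Matrix l' m' F)
    (P : Matrix l l' F) (V : Matrix m m' F) : Prop :=
  ∀ k, T k * V = P * T' k

theorem Intertwines.mul [Fintype l'] [Fintype l''] [Fintype m] [Fintype m']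
    {T : κ → Matrix l m F} {T' : κ → Matrix l' m' F} {T'' : κ → Matrix l'' m'' F}
    {P : Matrix l l' F} {V : Matrix m m' F} {Q : Matrix l' l'' F} {W : Matrix m' m'' F}
    (hPV : Intertwines T T' P V) (hQW : Intertwines T' T'' Q W) :
    Intertwines T T'' (P * Q) (V * W) := fun k => by
  rw [← Matrix.mul_assoc, hPV k, Matrix.mul_assoc, hQW k, Matrix.mul_assoc]

theorem Intertwines.of_transpose [Fintype l'] [Fintype m]
    {T : κ → Matrix l m F} {T' : κ → Matrix l' m' F}
    {P : Matrix l l' F} {V : Matrix m m' F}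
    (h : Intertwines (fun k => (T' k)ᵀ) (fun k => (T k)ᵀ) Vᵀ Pᵀ) : Intertwines T T' P V :=
  fun k => transpose_injective (by simpa only [transpose_mul] using (h k).symm)

variable [Fintype l] [Fintype m] [DecidableEq l] [DecidableEq m]

/-- A family of pencils `S r` is a semibrick when its members are pairwise Hom-orthogonal bricks:
there is no nonzero morphism between distinct members, and every endomorphism of a member is a
scalar. -/
structure IsSemibrick (S : R → κ → Matrix l m F) : Prop where
  eq_zero_of_ne : ∀ ⦃r s⦄, r ≠ s → ∀ ⦃P V⦄, Intertwines (S r) (S s) P V → P = 0 ∧ V = 0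
  exists_eq_smul_one : ∀ r ⦃P V⦄, Intertwines (S r) (S r) P V → ∃ c : F, P = c • 1 ∧ V = c • 1

theorem IsSemibrick.transpose {S : R → κ → Matrix l m F} (h : IsSemibrick S) :
    IsSemibrick fun r k => (S r k)ᵀ where
  eq_zero_of_ne r s hrs P V hPV := by
    have := h.eq_zero_of_ne hrs.symm (Intertwines.of_transpose (P := Vᵀ) (V := Pᵀ) hPV)
    simpa only [transpose_eq_zero, and_comm] using this
  exists_eq_smul_one r P V hPV := by
    obtain ⟨c, hV, hP⟩ :=
      h.exists_eq_smul_one r (Intertwines.of_transpose (P := Vᵀ) (V := Pᵀ) hPV)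
    exact ⟨c, transpose_injective (by simpa using hP), transpose_injective (by simpa using hV)⟩

theorem IsSemibrick.comp_surjective {κ' : Type*} {S : R → κ → Matrix l m F} (h : IsSemibrick S)
    {g : κ' → κ} (hg : Surjective g) : IsSemibrick fun r k => S r (g k) where
  eq_zero_of_ne _ _ hrs _ _ hPV := h.eq_zero_of_ne hrs (hg.forall.2 hPV)
  exists_eq_smul_one r _ _ hPV := h.exists_eq_smul_one r (hg.forall.2 hPV)

end Pencils

section Blocks

variable {F R κ a b c l m l' m' : Type*} [CommSemiring F]

/-- The `(r, s)` block of a matrix whose rows and columns are grouped into blocks indexed by `R`,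
with the index order of `Matrix.blockDiagonal`. -/
def blockAt (P : Matrix (a × R) (b × R) F) (r s : R) : Matrix a b F :=
  P.submatrix (·, r) (·, s)

/-- The matrix `[A₁ ⋯ A_R]` obtained by placing the matrices `A r` side by side. -/
def concatCols (A : R → Matrix a b F) : Matrix a (b × R) F :=
  of fun i p => A p.2 i p.1

/-- The direct sum of the pencils `S r`, with block diagonal slices. -/
def sumPencil [DecidableEq R] (S : R → κ → Matrix l m F) (k : κ) : Matrix (l × R) (m × R) F :=
  blockDiagonal fun r => S r k

theorem sumPencil_transpose [DecidableEq R] (S : R → κ → Matrix l m F) (k : κ) :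
    (sumPencil S k)ᵀ = sumPencil (fun r k => (S r k)ᵀ) k :=
  blockDiagonal_transpose _

theorem blockAt_one [DecidableEq R] [DecidableEq a] (r : R) :
    blockAt (1 : Matrix (a × R) (a × R) F) r r = 1 :=
  submatrix_one _ fun _ _ h => congrArg Prod.fst h

variable [Fintype R]

theorem blockAt_mul [Fintype b] (P : Matrix (a × R) (b × R) F) (Q : Matrix (b × R) (c × R) F)
    (r t : R) : blockAt (P * Q) r t = ∑ s, blockAt P r s * blockAt Q s t := by
  ext x y
  simp only [blockAt, submatrix_apply, mul_apply, Matrix.sum_apply, Fintype.sum_prod_type_right]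

theorem concatCols_eq_mul_blockAt [Fintype b] {A : R → Matrix a b F} {A' : R → Matrix a c F}
    {P : Matrix (b × R) (c × R) F} (h : concatCols A' = concatCols A * P) {r s : R}
    (hP : ∀ t ≠ r, blockAt P t s = 0) : A' s = A r * blockAt P r s := by
  have hsum : A' s = ∑ t, A t * blockAt P t s := by
    ext x y
    simpa [concatCols, blockAt, mul_apply, Matrix.sum_apply, Fintype.sum_prod_type_right]
      using congrFun₂ h x (y, s)
  rw [hsum, Finset.sum_eq_single r (fun t _ ht => by rw [hP t ht, Matrix.mul_zero]) (by simp)]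

variable [DecidableEq R]

theorem Intertwines.blockAt [Fintype l'] [Fintype m] {S : R → κ → Matrix l m F}
    {S' : R → κ → Matrix l' m' F} {P : Matrix (l × R) (l' × R) F} {V : Matrix (m × R) (m' × R) F}
    (h : Intertwines (sumPencil S) (sumPencil S') P V) (r s : R) :
    Intertwines (S r) (S' s) (blockAt P r s) (blockAt V r s) := fun k => by
  ext x y
  simpa [sumPencil, _root_.blockAt, mul_apply, blockDiagonal_apply, Fintype.sum_prod_type]
    using congrFun₂ (h k) (x, r) (y, s)

theorem concatCols_mul_sumPencil_mul_transpose [Fintype l] [Fintype m] (A : R → Matrix a l F)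
    (S : R → κ → Matrix l m F) (B : R → Matrix b m F) (k : κ) :
    concatCols A * sumPencil S k * (concatCols B)ᵀ = ∑ r, A r * S r k * (B r)ᵀ := by
  ext x y
  simp [concatCols, sumPencil, mul_apply, blockDiagonal_apply, Matrix.sum_apply,
    Fintype.sum_prod_type_right]

end Blocks

section Concise

variable {F K R κ p q i j l m : Type*} [CommRing F] [Field K]

/-- A pencil is row concise when no nonzero row vector annihilates all its slices. A third-order
tensor is concise in its first two modes when its slices and their transposes are row concise. -/
def RowConcise [Fintype p] (T : κ → Matrix p q F) : Prop :=
  ∀ x : p → F, (∀ k, x ᵥ* T k = 0) → x = 0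

theorem RowConcise.eq_of_mul_eq_mul [Fintype p] {T : κ → Matrix p q F} (hT : RowConcise T)
    {Y Z : Matrix i p F} (h : ∀ k, Y * T k = Z * T k) : Y = Z := by
  refine funext fun x => sub_eq_zero.1 (hT (Y x - Z x) fun k => ?_)
  rw [sub_vecMul, sub_eq_zero]
  exact congrFun (h k) x

theorem IsSemibrick.rowConcise_sumPencil [Fintype R] [DecidableEq R] [Fintype l] [Fintype m]
    [DecidableEq l] [DecidableEq m] [Nonempty m] {S : R → κ → Matrix l m F} (h : IsSemibrick S) :
    RowConcise (sumPencil S) := by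
  rintro x hx
  ext ⟨a, r⟩
  -- Together with `0`, the matrix with all rows equal to the `r`-th part of `x` is an endomorphism.
  have hP : Intertwines (S r) (S r) (of fun _ a => x (a, r)) 0 := fun k => by
    ext _ b
    simpa [sumPencil, vecMul, dotProduct, blockDiagonal_apply, Fintype.sum_prod_type, mul_apply]
      using (congrFun (hx k) (b, r)).symm
  obtain ⟨c, hPc, hc⟩ := h.exists_eq_smul_one r hP
  obtain ⟨b⟩ := ‹Nonempty m›
  have hc0 : c = 0 := by simpa using (congrFun₂ hc b b).symm
  simpa [hc0] using congrFun₂ hPc a a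

theorem RowConcise.isUnit_and_eq_mul [Fintype p] [DecidableEq p] {T N : κ → Matrix p q K}
    (hT : RowConcise T) {P : Matrix p p K} (hP : ∀ k, T k = P * N k) {X X' : Matrix i p K}
    (hX : ∀ k, X * T k = X' * N k) : IsUnit P ∧ X' = X * P := by
  have hPu : IsUnit P := vecMul_injective_iff_isUnit.1 fun x y (hxy : x ᵥ* P = y ᵥ* P) =>
    sub_eq_zero.1 <| hT _ fun k => by
      rw [hP, ← vecMul_vecMul, sub_vecMul, hxy, sub_self, zero_vecMul]
  refine ⟨hPu, ?_⟩
  obtain ⟨u, rfl⟩ := hPu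
  have hXQ : X = X' * (↑u⁻¹ : Matrix p p K) := hT.eq_of_mul_eq_mul fun k => by
    rw [hX, hP, Matrix.mul_assoc, ← Matrix.mul_assoc (↑u⁻¹ : Matrix p p K), u.inv_mul,
      Matrix.one_mul]
  rw [hXQ, Matrix.mul_assoc, u.inv_mul, Matrix.mul_one]

theorem RowConcise.exists_isUnit_of_mul_mul_transpose_eq [Fintype p] [Fintype q] [Fintype i]
    [Fintype j] [DecidableEq p] [DecidableEq q] {T T' : κ → Matrix p q K}
    (hT : RowConcise T) (hTt : RowConcise fun k => (T k)ᵀ)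
    {X X' : Matrix i p K} {Y Y' : Matrix j q K} {G : Matrix p i K} {H : Matrix q j K}
    (hG : G * X = 1) (hH : H * Y = 1) (h : ∀ k, X * T k * Yᵀ = X' * T' k * Y'ᵀ) :
    ∃ (P : Matrix p p K) (W : Matrix q q K), IsUnit P ∧ IsUnit W ∧ X' = X * P ∧ Y' = Y * W ∧
      ∀ k, T k = P * T' k * Wᵀ := by
  have hH' : Yᵀ * Hᵀ = 1 := by rw [← transpose_mul, hH, transpose_one]
  have hXT (k) : X * T k = X' * (T' k * (H * Y')ᵀ) := by
    simpa only [Matrix.mul_assoc, hH', Matrix.mul_one, transpose_mul] using congr($(h k) * Hᵀ)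
  have hTY (k) : T k * Yᵀ = G * X' * T' k * Y'ᵀ := by
    simpa only [← Matrix.mul_assoc, hG, Matrix.one_mul] using congr(G * $(h k))
  have hTT' (k) : T k = G * X' * T' k * (H * Y')ᵀ := by
    simpa only [← Matrix.mul_assoc, hG, Matrix.one_mul] using congr(G * $(hXT k))
  obtain ⟨hP, hX'⟩ := hT.isUnit_and_eq_mul (P := G * X')
    (fun k => (hTT' k).trans (Matrix.mul_assoc _ _ _)) hXT
  obtain ⟨hW, hY'⟩ := hTt.isUnit_and_eq_mul (P := H * Y') (N := fun k => (G * X' * T' k)ᵀ)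
    (X := Y) (X' := Y') (fun k => by rw [← transpose_transpose (H * Y'), ← transpose_mul, ← hTT'])
    (fun k => transpose_injective (by
      simpa only [transpose_mul, transpose_transpose] using hTY k))
  exact ⟨_, _, hP, hW, hX', hY', hTT'⟩

end Concise

section KrullSchmidt

variable {F R κ l m a b : Type*} [Fintype R]

theorem exists_perm_eq_one_of_sum_eq_one [Semiring F] [Nontrivial F] {c : R → R → F}
    (hrow : ∀ r, ∑ s, c r s = 1) (hcol : ∀ r t s, c r s ≠ 0 → c t s ≠ 0 → r = t) :
    ∃ π : Equiv.Perm R, ∀ r, c r (π r) = 1 := by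
  have hex (r) : ∃ s, c r s ≠ 0 := by
    by_contra! hr
    simpa [hr] using hrow r
  choose f hf using hex
  have hfinj : Injective f := fun r t hrt => hcol r t (f r) (hf r) (hrt ▸ hf t)
  let π : Equiv.Perm R := .ofBijective f (Finite.injective_iff_bijective.1 hfinj)
  refine ⟨π, fun r => ?_⟩
  rw [← hrow r, eq_comm]
  refine Finset.sum_eq_single_of_mem _ (Finset.mem_univ _) fun s _ hs => ?_
  obtain ⟨t, rfl⟩ := π.surjective s
  by_contra hrt
  exact hs (congrArg π (hcol t r (f t) (hf t) hrt))

variable [Field F] [DecidableEq R] [Fintype l] [Fintype m] [DecidableEq l] [DecidableEq m]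

theorem isUnit_right_of_mul_eq_smul_one {P Q : Matrix l l F} {c : F} (hc : c ≠ 0)
    (h : P * Q = c • 1) : IsUnit Q :=
  .of_mul_eq_one_right (c⁻¹ • P) <| by
    rw [smul_mul_assoc, h, smul_smul, inv_mul_cancel₀ hc, one_smul]

theorem IsSemibrick.exists_perm_blockAt [Nonempty l] {S S' : R → κ → Matrix l m F}
    (h : IsSemibrick S) {P Q : Matrix (l × R) (l × R) F} {V W : Matrix (m × R) (m × R) F}
    (hPV : Intertwines (sumPencil S) (sumPencil S') P V)
    (hQW : Intertwines (sumPencil S') (sumPencil S) Q W) (hPQ : P * Q = 1) :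
    ∃ π : Equiv.Perm R, ∀ r,
      blockAt P r (π r) * blockAt Q (π r) r = 1 ∧ blockAt V r (π r) * blockAt W (π r) r = 1 ∧
      ∀ t ≠ r, blockAt P t (π r) = 0 ∧ blockAt W (π r) t = 0 := by
  have hcomp (r s t) : Intertwines (S r) (S t) (blockAt P r s * blockAt Q s t)
      (blockAt V r s * blockAt W s t) := (hPV.blockAt r s).mul (hQW.blockAt s t)
  choose c hcP hcV using fun r s => h.exists_eq_smul_one r (hcomp r s r)
  -- If `c r s ≠ 0`, then the block `Q s r` is invertible and can be cancelled from the morphism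
  -- `P t s * Q s r`, which vanishes for `t ≠ r`.
  have hPt {r s t} (hc : c r s ≠ 0) (htr : t ≠ r) : blockAt P t s = 0 :=
    (isUnit_right_of_mul_eq_smul_one hc (hcP r s)).mul_left_eq_zero.1
      (h.eq_zero_of_ne htr (hcomp t s r)).1
  have hrow (r) : ∑ s, c r s = 1 := by
    have hone : (∑ s, c r s) • (1 : Matrix l l F) = 1 := by
      simp only [Finset.sum_smul, ← hcP, ← blockAt_mul, hPQ, blockAt_one]
    obtain ⟨x⟩ := ‹Nonempty l›
    simpa using congrFun₂ hone x x
  have hcol (r t s) (hr : c r s ≠ 0) (ht : c t s ≠ 0) : r = t := by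
    by_contra hrt
    have hzero := hcP t s
    rw [hPt hr (Ne.symm hrt), Matrix.zero_mul] at hzero
    exact ht ((smul_eq_zero.1 hzero.symm).resolve_right one_ne_zero)
  obtain ⟨π, hπ⟩ := exists_perm_eq_one_of_sum_eq_one hrow hcol
  refine ⟨π, fun r => ?_⟩
  have hVW : blockAt V r (π r) * blockAt W (π r) r = 1 := by rw [hcV, hπ, one_smul]
  refine ⟨by rw [hcP, hπ, one_smul], hVW, fun t htr => ⟨hPt (by simp [hπ]) htr, ?_⟩⟩
  exact (IsUnit.of_mul_eq_one _ hVW).mul_right_eq_zero.1 (h.eq_zero_of_ne htr.symm (hcomp _ _ _)).2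

theorem IsSemibrick.exists_perm_of_sum_mul_mul_transpose_eq [Nonempty l] [Nonempty m]
    [Fintype a] [Fintype b] {S S' : R → κ → Matrix l m F} (h : IsSemibrick S)
    {A A' : R → Matrix a l F} {B B' : R → Matrix b m F}
    {G : Matrix (l × R) a F} {H : Matrix (m × R) b F}
    (hG : G * concatCols A = 1) (hH : H * concatCols B = 1)
    (hAB : ∀ k, ∑ r, A r * S r k * (B r)ᵀ = ∑ r, A' r * S' r k * (B' r)ᵀ) :
    ∃ π : Equiv.Perm R, ∀ r, ∃ (Θa : Matrix l l F) (Θb : Matrix m m F), IsUnit Θa ∧ IsUnit Θb ∧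
      A' (π r) = A r * Θa ∧ B' (π r) = B r * Θb ∧ ∀ k, Θa * S' (π r) k * Θbᵀ = S r k := by
  simp only [← concatCols_mul_sumPencil_mul_transpose] at hAB
  have hT : RowConcise fun k => (sumPencil S k)ᵀ := by
    simpa only [sumPencil_transpose] using h.transpose.rowConcise_sumPencil
  obtain ⟨P, W, hP, hW, hA', hB', hSS'⟩ :=
    h.rowConcise_sumPencil.exists_isUnit_of_mul_mul_transpose_eq hT hG hH hAB
  obtain ⟨Q, hPQ, hQP⟩ := isUnit_iff_exists.1 hP
  obtain ⟨V, hWV, -⟩ := isUnit_iff_exists.1 ((isUnit_transpose W).2 hW)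
  have hPV : Intertwines (sumPencil S) (sumPencil S') P V := fun k => by
    rw [hSS', Matrix.mul_assoc, hWV, Matrix.mul_one]
  have hQW : Intertwines (sumPencil S') (sumPencil S) Q Wᵀ := fun k => by
    rw [hSS', Matrix.mul_assoc P, ← Matrix.mul_assoc Q, hQP, Matrix.one_mul]
  obtain ⟨π, hπ⟩ := h.exists_perm_blockAt hPV hQW hPQ
  refine ⟨π, fun r => ?_⟩
  obtain ⟨hPQr, hVWr, hzero⟩ := hπ r
  refine ⟨blockAt P r (π r), blockAt W r (π r), .of_mul_eq_one _ hPQr,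
    (isUnit_transpose _).1 (.of_mul_eq_one_right _ hVWr),
    concatCols_eq_mul_blockAt hA' fun t ht => (hzero t ht).1,
    concatCols_eq_mul_blockAt hB' fun t ht => transpose_eq_zero.1 (hzero t ht).2, fun k => ?_⟩
  rw [← hPV.blockAt r (π r) k, Matrix.mul_assoc]
  exact (congrArg _ hVWr).trans (Matrix.mul_one _)

end KrullSchmidt

section Witnesses

variable {F R κ l m : Type*} [Field F] [DecidableEq m] {y : R × m → F}

theorem eq_smul_one_of_off_diag_eq_zero {V : Matrix m m F} {c : F}
    (hoff : ∀ a b, a ≠ b → V a b = 0) (hdiag : ∀ a, V a a = c) : V = c • 1 := by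
  ext a b
  obtain rfl | hab := eq_or_ne a b
  · simp [hdiag]
  · simp [hoff a b hab, hab]

variable [Fintype m]

theorem eq_zero_of_diagonal_mul_eq_mul_diagonal {d e : m → F} {V : Matrix m m F}
    (h : diagonal d * V = V * diagonal e) {a b : m} (hab : d a ≠ e b) : V a b = 0 := by
  have hV := congrFun₂ h a b
  rw [diagonal_mul, mul_diagonal, mul_comm] at hV
  by_contra hne
  exact hab (mul_left_cancel₀ hne hV)

/-- Square pencils `(1, J, diag y_r)`, with `J` the all-ones matrix, which form a semibrick when the
diagonal entries `y` are all distinct. -/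
def squarePencil (y : R × m → F) (r : R) : Fin 3 → Matrix m m F :=
  ![1, of fun _ _ => 1, diagonal fun a => y (r, a)]

theorem isSemibrick_squarePencil (hy : Injective y) : IsSemibrick (squarePencil y) := by
  have hV {r s P V} (h : Intertwines (squarePencil y r) (squarePencil y s) P V) : V = P := by
    simpa [squarePencil] using h 0
  have hd {r s P V} (h : Intertwines (squarePencil y r) (squarePencil y s) P V) {a b}
      (hab : (r, a) ≠ (s, b)) : V a b = 0 := by
    obtain rfl := hV h
    exact eq_zero_of_diagonal_mul_eq_mul_diagonal (h 2) (hy.ne hab)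
  refine ⟨fun r s hrs P V h => ?_, fun r P V h => ?_⟩
  · have hV0 : V = 0 := Matrix.ext fun a b => hd h (by simp [hrs])
    exact ⟨hV h ▸ hV0, hV0⟩
  · obtain rfl := hV h
    have hoff (a b) (hab : a ≠ b) : V a b = 0 := hd h (by simp [hab])
    have hdiag (a b) : V b b = V a a := by
      have hJ : ∑ c, V c b = ∑ c, V a c := by
        simpa [squarePencil, mul_apply] using congrFun₂ (h 1) a b
      rwa [Finset.sum_eq_single b (fun c _ hc => hoff c b hc) (by simp),
        Finset.sum_eq_single a (fun c _ hc => hoff a c hc.symm) (by simp)] at hJ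
    obtain hm | ⟨⟨a⟩⟩ := isEmpty_or_nonempty m
    · exact ⟨0, Subsingleton.elim _ _, Subsingleton.elim _ _⟩
    · have hVa := eq_smul_one_of_off_diag_eq_zero hoff (hdiag a)
      exact ⟨_, hVa, hVa⟩

variable [DecidableEq κ]

/-- Tall pencils whose rows are indexed by `e : l → κ × m`. The slice `some k` is the identity on
the rows of the `k`-th layer and zero elsewhere; the slice `none` is `diag y_r` on the layer `k₀`
and has all entries `1` elsewhere. The layers other than `k₀` may be incomplete. -/
def tallPencil (e : l → κ × m) (k₀ : κ) (y : R × m → F) (r : R) : Option κ → Matrix l m F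
  | some k => of fun a b => if e a = (k, b) then 1 else 0
  | none => of fun a b => if (e a).1 = k₀ then diagonal (fun c => y (r, c)) (e a).2 b else 1

section

variable [Fintype l] {e : l → κ × m} {k₀ : κ} {r s : R} {P : Matrix l l F} {V : Matrix m m F}

theorem Intertwines.left_apply_of_tallPencil (he : Injective e)
    (h : Intertwines (tallPencil e k₀ y r) (tallPencil e k₀ y s) P V) (a a' : l) :
    P a a' = if (e a).1 = (e a').1 then V (e a).2 (e a').2 else 0 := by
  classical
  have hsome := congrFun₂ (h (some (e a').1)) a (e a').2
  have hleft : (tallPencil e k₀ y r (some (e a').1) * V) a (e a').2 =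
      if (e a).1 = (e a').1 then V (e a).2 (e a').2 else 0 := by
    split_ifs with hk <;> simp [tallPencil, mul_apply, Prod.ext_iff, hk]
  have hright : (P * tallPencil e k₀ y s (some (e a').1)) a (e a').2 = P a a' := by
    simp [tallPencil, mul_apply, he.eq_iff]
  rw [← hright, ← hsome, hleft]

theorem Intertwines.right_apply_eq_zero_of_tallPencil (hy : Injective y) (he : Injective e)
    (hk₀ : ∀ b, (k₀, b) ∈ Set.range e)
    (h : Intertwines (tallPencil e k₀ y r) (tallPencil e k₀ y s) P V) {a b : m}
    (hab : (r, a) ≠ (s, b)) : V a b = 0 := by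
  refine eq_zero_of_diagonal_mul_eq_mul_diagonal (d := fun c => y (r, c)) (e := fun c => y (s, c))
    (Matrix.ext fun a b => ?_) (hy.ne hab)
  obtain ⟨i, hi⟩ := hk₀ a
  obtain ⟨j, hj⟩ := hk₀ b
  have hnone := congrFun₂ (h none) i b
  have hleft : (tallPencil e k₀ y r none * V) i b = y (r, a) * V a b := by
    simp [tallPencil, mul_apply, hi, diagonal_apply]
  have hright : (P * tallPencil e k₀ y s none) i b = V a b * y (s, b) := by
    rw [mul_apply, Finset.sum_eq_single_of_mem j (Finset.mem_univ _) fun c _ hcj => ?_]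
    · simp [tallPencil, h.left_apply_of_tallPencil he, hi, hj]
    · rw [h.left_apply_of_tallPencil he, hi]
      split_ifs with hk
      · have hc : (e c).2 ≠ b := fun hb => hcj (he (hj ▸ Prod.ext hk.symm hb))
        simp [tallPencil, ← hk, hc]
      · exact zero_mul _
  rw [diagonal_mul, mul_diagonal, ← hleft, hnone, hright]

end

theorem isSemibrick_tallPencil [Fintype l] [DecidableEq l] {e : l → κ × m} {k₀ : κ}
    (hy : Injective y) (he : Injective e) (hk₀ : ∀ b, (k₀, b) ∈ Set.range e)
    {a₁ : l} (ha₁ : (e a₁).1 ≠ k₀) : IsSemibrick (tallPencil e k₀ y) := by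
  refine ⟨fun r s hrs P V h => ?_, fun r P V h => ?_⟩
  · have hV : V = 0 := Matrix.ext fun a b =>
      h.right_apply_eq_zero_of_tallPencil hy he hk₀ (by simp [hrs])
    exact ⟨Matrix.ext fun a a' => by simp [h.left_apply_of_tallPencil he, hV], hV⟩
  · have hoff (a b) (hab : a ≠ b) : V a b = 0 :=
      h.right_apply_eq_zero_of_tallPencil hy he hk₀ (by simp [hab])
    have hPoff (a a') (haa' : a ≠ a') : P a a' = 0 := by
      rw [h.left_apply_of_tallPencil he, ite_eq_right_iff]
      exact fun hk => hoff _ _ fun hb => haa' (he (Prod.ext hk hb))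
    have hPdiag (a) : P a a = V (e a).2 (e a).2 := by simp [h.left_apply_of_tallPencil he]
    have hVdiag (b) : V b b = V (e a₁).2 (e a₁).2 := by
      have hnone := congrFun₂ (h none) a₁ b
      rw [mul_apply, mul_apply,
        Finset.sum_eq_single b (fun c _ hc => by rw [hoff c b hc, mul_zero]) (by simp),
        Finset.sum_eq_single a₁ (fun a _ ha => by rw [hPoff a₁ a ha.symm, zero_mul]) (by simp),
        hPdiag] at hnone
      simpa [tallPencil, ha₁] using hnone
    exact ⟨_, eq_smul_one_of_off_diag_eq_zero hPoff fun a => (hPdiag a).trans (hVdiag _),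
      eq_smul_one_of_off_diag_eq_zero hoff hVdiag⟩

end Witnesses

section Existence

theorem exists_injective_of_countable_of_infinite (α β : Type*) [Countable α] [Infinite β] :
    ∃ f : α → β, Injective f := by
  obtain ⟨f, hf⟩ := exists_injective_nat α
  exact ⟨_, (Infinite.natEmbedding β).injective.comp hf⟩

variable (F R : Type*) [Field F] [Infinite F] [Countable R]

theorem exists_isSemibrick_of_three_le (m : Type*) [Fintype m] [DecidableEq m] {K : ℕ}
    (hK : 3 ≤ K) : ∃ S : R → Fin K → Matrix m m F, IsSemibrick S := by
  obtain ⟨y, hy⟩ := exists_injective_of_countable_of_infinite (R × m) F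
  exact ⟨_, (isSemibrick_squarePencil hy).comp_surjective
    (invFun_surjective (Fin.castLE_injective hK))⟩

theorem exists_isSemibrick_of_lt_of_le_mul {L M n : ℕ} (hML : M < L) (hL : L ≤ n * M) :
    ∃ S : R → Fin (n + 1) → Matrix (Fin L) (Fin M) F, IsSemibrick S := by
  obtain ⟨y, hy⟩ := exists_injective_of_countable_of_infinite (R × Fin M) F
  have : NeZero n := ⟨by rintro rfl; omega⟩
  let e (a : Fin L) : Fin n × Fin M := finProdFinEquiv.symm (a.castLE hL)
  have he : Injective e := finProdFinEquiv.symm.injective.comp (Fin.castLE_injective hL)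
  have hlayer (b) : e (b.castLE hML.le) = (0, b) :=
    (Equiv.symm_apply_eq _).2 (Fin.ext (by simp))
  have hM : (e ⟨M, hML⟩).1 ≠ 0 := fun h => by
    have hM0 : 0 < M := Nat.pos_of_ne_zero (by rintro rfl; omega)
    simpa [e, Nat.div_self hM0] using congrArg Fin.val h
  exact ⟨_, (isSemibrick_tallPencil hy he (fun b => ⟨_, hlayer b⟩) hM).comp_surjective
    (finSuccEquiv n).surjective⟩

theorem exists_isSemibrick_of_lt_of_ceil_div_lt {L M K : ℕ} (hM : 0 < M) (hML : M < L)
    (hK : ⌈(L : ℚ) / M⌉₊ < K) : ∃ S : R → Fin K → Matrix (Fin L) (Fin M) F, IsSemibrick S := by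
  obtain ⟨n, rfl⟩ := Nat.exists_eq_add_one_of_ne_zero (Nat.ne_zero_of_lt hK)
  have hLn : (L : ℚ) / M ≤ n := Nat.ceil_le.1 (Nat.le_of_lt_succ hK)
  rw [div_le_iff₀ (by exact_mod_cast hM)] at hLn
  exact exists_isSemibrick_of_lt_of_le_mul F R hML (by exact_mod_cast hLn)

theorem exists_isSemibrick {L M K : ℕ} (hL : 0 < L) (hM : 0 < M)
    (hK : max (⌈(L : ℚ) / M⌉₊ + ⌈(M : ℚ) / L⌉₊) 3 ≤ K) :
    ∃ S : R → Fin K → Matrix (Fin L) (Fin M) F, IsSemibrick S := by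
  have hLM : 0 < ⌈(L : ℚ) / M⌉₊ := Nat.ceil_pos.2 (by positivity)
  have hML : 0 < ⌈(M : ℚ) / L⌉₊ := Nat.ceil_pos.2 (by positivity)
  obtain ⟨hceil, hK3⟩ := max_le_iff.1 hK
  obtain hlt | rfl | hgt := lt_trichotomy L M
  · obtain ⟨S, hS⟩ := exists_isSemibrick_of_lt_of_ceil_div_lt F R hL hlt (K := K) (by omega)
    exact ⟨_, hS.transpose⟩
  · exact exists_isSemibrick_of_three_le F R _ hK3
  · exact exists_isSemibrick_of_lt_of_ceil_div_lt F R hM hgt (by omega)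

end Existence

section Defect

variable {F K R κ l l' m m' : Type*} [CommRing F] [Field K] [CharZero K] [Fintype l'] [Fintype m]

/-- The bilinear map sending the pencils `(T, T')` and the matrices `(P, V)` to the differences
`T k * V - P * T' k`, which all vanish exactly when `(P, V)` intertwines `T` and `T'`. -/
def intertwiningDefect : ((κ → Matrix l m F) × (κ → Matrix l' m' F)) →ₗ[F]
    (Matrix l l' F × Matrix m m' F) →ₗ[F] κ → Matrix l m' F :=
  .mk₂ F (fun T p k => T.1 k * p.2 - p.1 * T.2 k)
    (fun _ _ _ => funext fun _ => by simp [Matrix.add_mul, Matrix.mul_add, add_sub_add_comm])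
    (fun _ _ _ => funext fun _ => by simp [smul_sub])
    (fun _ _ _ => funext fun _ => by simp [Matrix.add_mul, Matrix.mul_add, add_sub_add_comm])
    (fun _ _ _ => funext fun _ => by simp [smul_sub])

theorem intertwiningDefect_eq_zero_iff {T : κ → Matrix l m F} {T' : κ → Matrix l' m' F}
    {P : Matrix l l' F} {V : Matrix m m' F} :
    intertwiningDefect (T, T') (P, V) = 0 ↔ Intertwines T T' P V := by
  simp [intertwiningDefect, Intertwines, funext_iff, sub_eq_zero]

theorem injective_intertwiningDefect_iff {T : κ → Matrix l m F} {T' : κ → Matrix l' m' F} :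
    Injective (intertwiningDefect (T, T')) ↔ ∀ P V, Intertwines T T' P V → P = 0 ∧ V = 0 := by
  simp [injective_iff_map_eq_zero, intertwiningDefect_eq_zero_iff]

variable [Fintype l] [DecidableEq l] [DecidableEq m]

-- Subtracting the scalar endomorphism with the same trace turns the brick property, which is not
-- a rank condition, into the absence of nonzero endomorphisms with trace zero left factor.
theorem injective_intertwiningDefect_domRestrict_ker_trace_iff [Nonempty l]
    {T : κ → Matrix l m K} :
    Injective ((intertwiningDefect (T, T)).domRestrict
      (LinearMap.ker (traceLinearMap l K K ∘ₗ LinearMap.fst K _ (Matrix m m K)))) ↔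
      ∀ P V, Intertwines T T P V → ∃ c : K, P = c • 1 ∧ V = c • 1 := by
  have hcard : (Fintype.card l : K) ≠ 0 := by simp
  have hiff : Injective ((intertwiningDefect (T, T)).domRestrict
      (LinearMap.ker (traceLinearMap l K K ∘ₗ LinearMap.fst K _ (Matrix m m K)))) ↔
      ∀ P V, trace P = 0 → Intertwines T T P V → P = 0 ∧ V = 0 := by
    simp [injective_iff_map_eq_zero, intertwiningDefect_eq_zero_iff]
  refine hiff.trans ⟨fun h P V hPV => ?_, fun h P V hP hPV => ?_⟩
  · let c := trace P / Fintype.card l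
    have hc : Intertwines T T (P - c • 1) (V - c • 1) := fun k => by
      simp [Matrix.mul_sub, Matrix.sub_mul, hPV k]
    have htrace : trace (P - c • 1) = 0 := by simp [c, hcard]
    exact ⟨c, by simpa only [sub_eq_zero] using h _ _ htrace hc⟩
  · obtain ⟨c, rfl, rfl⟩ := h P V hPV
    have hc : c = 0 := by simpa using hP
    simp [hc]

theorem isSemibrick_iff_injective_intertwiningDefect [Nonempty l] {S : R → κ → Matrix l m K} :
    IsSemibrick S ↔
      (∀ r s, r ≠ s → Injective (intertwiningDefect (S r, S s))) ∧
      ∀ r, Injective ((intertwiningDefect (S r, S r)).domRestrict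
        (LinearMap.ker (traceLinearMap l K K ∘ₗ LinearMap.fst K _ (Matrix m m K)))) := by
  simp only [injective_intertwiningDefect_iff,
    injective_intertwiningDefect_domRestrict_ker_trace_iff]
  exact ⟨fun h => ⟨h.eq_zero_of_ne, h.exists_eq_smul_one⟩, fun h => ⟨h.1, h.2⟩⟩

end Defect

section Genericity

variable {E : Type*} [NormedAddCommGroup E] [NormedSpace ℝ E] [FiniteDimensional ℝ E]
  [MeasurableSpace E] [BorelSpace E] (μ : Measure E) [μ.IsAddHaarMeasure]

theorem ae_isUnit_of_eq_one {n : Type*} [Fintype n] [DecidableEq n] (N : E →ₗ[ℝ] Matrix n n ℝ)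
    {x₀ : E} (hx₀ : N x₀ = 1) : ∀ᵐ x ∂μ, IsUnit (N x) := by
  have hmeas : MeasurableSet {x | IsUnit (N x)} := by
    simp only [isUnit_iff_isUnit_det, isUnit_iff_ne_zero]
    exact (isOpen_ne_fun N.continuous_of_finiteDimensional.matrix_det
      continuous_const).measurableSet
  -- On each line in the direction `x₀`, singularity means that `-t` is an eigenvalue of `N y`.
  refine ae_mem_of_ae_add_linearMap_mem (LinearMap.toSpanSingleton ℝ E x₀) volume μ hmeas
    fun y => ?_
  have hfin : (Neg.neg ⁻¹' spectrum ℝ (N y)).Finite :=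
    (finite_spectrum (N y)).preimage neg_injective.injOn
  filter_upwards [compl_mem_ae_iff.2 (hfin.measure_zero volume)] with t ht
  have hunit : IsUnit (algebraMap ℝ _ (-t) - N y) := spectrum.notMem_iff.1 ht
  rw [← IsUnit.neg_iff] at hunit
  change IsUnit (N (y + t • x₀))
  simpa [hx₀, Algebra.algebraMap_eq_smul_one, add_comm] using hunit

theorem ae_exists_mul_eq_one {a b : Type*} [Fintype a] [Finite b] [DecidableEq b]
    (N : E →ₗ[ℝ] Matrix a b ℝ) {x₀ : E} {G₀ : Matrix b a ℝ} (hx₀ : G₀ * N x₀ = 1) :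
    ∀ᵐ x ∂μ, ∃ G : Matrix b a ℝ, G * N x = 1 := by
  have := Fintype.ofFinite b
  filter_upwards [ae_isUnit_of_eq_one μ (mulLeftLinearMap b ℝ G₀ ∘ₗ N) hx₀] with x hx
  obtain ⟨u, hu⟩ := hx.exists_left_inv
  exact ⟨u * G₀, by rwa [Matrix.mul_assoc]⟩

theorem ae_injective {U W : Type*} [AddCommGroup U] [Module ℝ U] [FiniteDimensional ℝ U]
    [AddCommGroup W] [Module ℝ W] (N : E →ₗ[ℝ] U →ₗ[ℝ] W) {x₀ : E} (hx₀ : Injective (N x₀)) :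
    ∀ᵐ x ∂μ, Injective (N x) := by
  obtain ⟨G, hG⟩ := LinearMap.exists_leftInverse_of_injective (N x₀) (LinearMap.ker_eq_bot.2 hx₀)
  let b := Module.finBasis ℝ U
  have hone : LinearMap.toMatrix b b (G ∘ₗ N x₀) = 1 := by rw [hG, LinearMap.toMatrix_id]
  filter_upwards [ae_isUnit_of_eq_one μ
    ((LinearMap.toMatrix b b).toLinearMap ∘ₗ LinearMap.llcomp ℝ U W U G ∘ₗ N) hone] with x hx
  have hunit : IsUnit (G ∘ₗ N x) := (LinearMap.isUnit_toMatrix_iff b).1 hx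
  exact Injective.of_comp (f := G) ((Module.End.isUnit_iff _).1 hunit).injective

theorem IsSemibrick.ae_isSemibrick {R κ l m : Type*} [Countable R] [Fintype l] [Fintype m]
    [DecidableEq l] [DecidableEq m] [Nonempty l] (S : E →ₗ[ℝ] R → κ → Matrix l m ℝ) {x₀ : E}
    (hx₀ : IsSemibrick (S x₀)) : ∀ᵐ x ∂μ, IsSemibrick (S x) := by
  simp only [isSemibrick_iff_injective_intertwiningDefect] at hx₀ ⊢
  simp only [Filter.eventually_and, ae_all_iff]
  let N (r s : R) := intertwiningDefect ∘ₗ (LinearMap.proj r).prod (LinearMap.proj s) ∘ₗ S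
  exact ⟨fun r s hrs => ae_injective μ (N r s) (hx₀.1 r s hrs),
    fun r => ae_injective μ ((N r r).compl₂ (Submodule.subtype _)) (hx₀.2 r)⟩

end Genericity

section BlockTerm

/-- The frontal slices `D(:, :, k)` of a third-order tensor, the pencil by which the core tensors
of a block-term decomposition enter the argument. -/
def frontalSlices {F l m κ : Type*} (D : l → m → κ → F) (k : κ) : Matrix l m F :=
  of fun x y => D x y k

theorem mul_frontalSlices_mul_transpose_apply {F a b l m κ : Type*} [CommSemiring F] [Fintype l]
    [Fintype m] (A : Matrix a l F) (D : l → m → κ → F) (B : Matrix b m F) (i : a) (j : b) (k : κ) :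
    (A * frontalSlices D k * Bᵀ) i j = ∑ x, ∑ y, D x y k * A i x * B j y := by
  simp only [frontalSlices, mul_apply, of_apply, transpose_apply, Finset.sum_mul]
  rw [Finset.sum_comm]
  exact Fintype.sum_congr _ _ fun x => Fintype.sum_congr _ _ fun y => by rw [mul_comm (A i x)]

theorem submatrix_one_mul_concatCols {F R i l : Type*} [CommSemiring F] [Fintype i] [DecidableEq i]
    [DecidableEq R] [DecidableEq l] {e : l × R → i} (he : Injective e) :
    (1 : Matrix i i F).submatrix e id *
      concatCols (fun r => (1 : Matrix i i F).submatrix id fun x => e (x, r)) = 1 := by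
  ext p q
  simp [concatCols, mul_apply, one_apply, he.eq_iff]

set_option synthInstance.maxSize 1024 in
theorem ae_exists_mul_concatCols_eq_one {R L I : ℕ} (hI : L * R ≤ I) :
    ∀ᵐ A : Fin R → Matrix (Fin I) (Fin L) ℝ,
      ∃ G : Matrix (Fin L × Fin R) (Fin I) ℝ, G * concatCols A = 1 := by
  let N : (Fin R → Fin I → Fin L → ℝ) →ₗ[ℝ] Matrix (Fin I) (Fin L × Fin R) ℝ :=
    { toFun := concatCols, map_add' _ _ := rfl, map_smul' _ _ := rfl }
  let e (x : Fin L × Fin R) : Fin I := (finProdFinEquiv x).castLE hI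
  have he : Injective e := (Fin.castLE_injective hI).comp finProdFinEquiv.injective
  exact ae_exists_mul_eq_one volume N
    (x₀ := fun r => (1 : Matrix (Fin I) (Fin I) ℝ).submatrix id fun x => e (x, r))
    (submatrix_one_mul_concatCols he)

set_option synthInstance.maxSize 1024 in
theorem ae_isSemibrick_frontalSlices {R L M K : ℕ} (hL : 0 < L) (hM : 0 < M)
    (hK : max (⌈(L : ℚ) / M⌉₊ + ⌈(M : ℚ) / L⌉₊) 3 ≤ K) :
    ∀ᵐ D : Fin R → Fin L → Fin M → Fin K → ℝ,
      IsSemibrick fun r => frontalSlices (D r) := by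
  have : NeZero L := ⟨hL.ne'⟩
  obtain ⟨S, hS⟩ := exists_isSemibrick ℝ (Fin R) hL hM hK
  let N : (Fin R → Fin L → Fin M → Fin K → ℝ) →ₗ[ℝ]
      Fin R → Fin K → Matrix (Fin L) (Fin M) ℝ :=
    { toFun D r := frontalSlices (D r), map_add' _ _ := rfl, map_smul' _ _ := rfl }
  exact IsSemibrick.ae_isSemibrick volume N (x₀ := fun r l m k => S r k l m) hS

end BlockTerm

/-- **Lemma (Corollary 2.6 of Domanov et al.): almost-sure essential uniqueness
of the rank-`(L,M,·)` block-term decomposition.** -/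
theorem lmdot_essential_uniqueness
    (R L M I J K : ℕ)
    (hR : 0 < R) (hL : 0 < L) (hM : 0 < M)
    (hI0 : 0 < I) (hJ0 : 0 < J) (hK0 : 0 < K)
    (hI : I ≥ L * R) (hJ : J ≥ M * R)
    (hK : K ≥ max (⌈(L : ℚ) / (M : ℚ)⌉₊ + ⌈(M : ℚ) / (L : ℚ)⌉₊) 3) :
    ∀ᵐ x : (Fin R → Matrix (Fin I) (Fin L) ℝ) × (Fin R → Matrix (Fin J) (Fin M) ℝ) ×
        (Fin R → (Fin L → Fin M → Fin K → ℝ)) ∂volume,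
      ∀ (A' : Fin R → Matrix (Fin I) (Fin L) ℝ) (B' : Fin R → Matrix (Fin J) (Fin M) ℝ)
        (D' : Fin R → (Fin L → Fin M → Fin K → ℝ)),
        (∀ i j k, (∑ r, ∑ l, ∑ m, x.2.2 r l m k * x.1 r i l * x.2.1 r j m)
            = ∑ r, ∑ l, ∑ m, D' r l m k * A' r i l * B' r j m) →
        ∃ π : Equiv.Perm (Fin R), ∀ r : Fin R,
          ∃ (Θa : Matrix (Fin L) (Fin L) ℝ) (Θb : Matrix (Fin M) (Fin M) ℝ),
            IsUnit Θa ∧ IsUnit Θb ∧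
            A' (π r) = x.1 r * Θa ∧
            B' (π r) = x.2.1 r * Θb ∧
            (∀ l m k, (∑ l', ∑ m', D' (π r) l' m' k * Θa l l' * Θb m m')
                = x.2.2 r l m k) := by
  have : NeZero L := ⟨hL.ne'⟩
  have : NeZero M := ⟨hM.ne'⟩
  filter_upwards [
    Measure.quasiMeasurePreserving_fst.ae (ae_exists_mul_concatCols_eq_one hI),
    Measure.quasiMeasurePreserving_snd.ae
      (Measure.quasiMeasurePreserving_fst.ae (ae_exists_mul_concatCols_eq_one hJ)),
    Measure.quasiMeasurePreserving_snd.ae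
      (Measure.quasiMeasurePreserving_snd.ae (ae_isSemibrick_frontalSlices hL hM hK))]
    with ⟨A, B, D⟩ ⟨G, hG⟩ ⟨H, hH⟩ hD A' B' D' hY
  obtain ⟨π, hπ⟩ := hD.exists_perm_of_sum_mul_mul_transpose_eq
    (S' := fun r => frontalSlices (D' r)) (A' := A') (B' := B') hG hH fun k => by
      ext i j
      simpa only [Matrix.sum_apply, mul_frontalSlices_mul_transpose_apply] using hY i j k
  refine ⟨π, fun r => ?_⟩
  obtain ⟨Θa, Θb, hΘa, hΘb, hA', hB', hD'⟩ := hπ r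
  refine ⟨Θa, Θb, hΘa, hΘb, hA', hB', fun l m k => ?_⟩
  exact (mul_frontalSlices_mul_transpose_apply ..).symm.trans (congrFun₂ (hD' k) l m)
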